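/- Let ℓ be Lebesgue measure and δ the counting measure on the Borel σ-algebra of ℝ. A Borel set B ⊆ ℝ² is σ-finite with respect to the product measure ℓ⊗δ if and only if B = ⋃_{n∈ℕ} A_n × {a_n} for some Borel sets A_n ⊆ ℝ and points a_n ∈ ℝ. -/

import Mathlib

open Set ENNReal

/-- A family of sets is a σ-ring if it contains `∅` and is closed under
set differences and countable unions. -/
def IsSigmaRing {α : Type*} (C : Set (Set α)) : Prop :=
  ∅ ∈ C ∧ (∀ A B : Set α, A ∈ C → B ∈ C → A \ B ∈ C) ∧
    ∀ f : ℕ → Set α, (∀ n, f n ∈ C) → (⋃ n, f n) ∈ C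

/-- The σ-ring generated by a family of sets. -/
def genSR {α : Type*} (D : Set (Set α)) : Set (Set α) :=
  ⋂₀ {C | IsSigmaRing C ∧ D ⊆ C}

/-- A measure on a σ-ring: countably additive, vanishing on `∅`. -/
def IsMeasure {α : Type*} (C : Set (Set α)) (μ : Set α → ℝ≥0∞) : Prop :=
  μ ∅ = 0 ∧ ∀ f : ℕ → Set α, (∀ n, f n ∈ C) →
    Pairwise (Function.onFun Disjoint f) → μ (⋃ n, f n) = ∑' n, μ (f n)

/-- The family of μ-σ-finite sets: countable unions of sets of finite measure. -/
def sigmaFin {α : Type*} (C : Set (Set α)) (μ : Set α → ℝ≥0∞) : Set (Set α) :=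
  {A | ∃ g : ℕ → Set α, (∀ n, g n ∈ C ∧ μ (g n) < ⊤) ∧ A = ⋃ n, g n}

/-- Restriction of a family of sets to a set `S`. -/
def restrictFam {α : Type*} (D : Set (Set α)) (S : Set α) : Set (Set α) :=
  (fun A => A ∩ S) '' D

/-- The product σ-ring, generated by measurable rectangles. -/
def prodSR {α β : Type*} (S : Set (Set α)) (T : Set (Set β)) : Set (Set (α × β)) :=
  genSR {R | ∃ A ∈ S, ∃ B ∈ T, R = A ×ˢ B}

/-- The σ-algebra generated by a family of sets. -/
def genSA {α : Type*} (D : Set (Set α)) : MeasurableSpace α :=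
  MeasurableSpace.generateFrom D

/-- The (extended) Lebesgue integral of a nonnegative function with respect to a
measure on a σ-ring, as the supremum of integrals of simple functions below it. -/
noncomputable def lintSR {α : Type*} (C : Set (Set α)) (μ : Set α → ℝ≥0∞)
    (f : α → ℝ≥0∞) : ℝ≥0∞ :=
  ⨆ (n : ℕ) (c : Fin n → ℝ≥0∞) (A : Fin n → Set α) (_ : ∀ i, A i ∈ C)
    (_ : ∀ x, (∑ i, (A i).indicator (fun _ => c i) x) ≤ f x),
    ∑ i, c i * μ (A i)

/-- The positive part of an extended real, as an `ℝ≥0∞`. -/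
noncomputable def epos (x : EReal) : ℝ≥0∞ := (x ⊔ 0).abs

/-- Measurability of an extended-real function with respect to a σ-ring:
measurable for the generated σ-algebra, with support in the σ-ring. -/
def SRMeasurableE {α : Type*} (C : Set (Set α)) (f : α → EReal) : Prop :=
  @Measurable α EReal (genSA C) _ f ∧ {x | f x ≠ 0} ∈ C

/-- The Lebesgue integral of an extended-real function w.r.t. a measure on a σ-ring. -/
noncomputable def integralE {α : Type*} (C : Set (Set α)) (μ : Set α → ℝ≥0∞)
    (f : α → EReal) : EReal :=
  ((lintSR C μ fun x => epos (f x) : ℝ≥0∞) : EReal) -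
    ((lintSR C μ fun x => epos (-f x) : ℝ≥0∞) : EReal)

/-- Integrability of an extended-real function w.r.t. a measure on a σ-ring. -/
def IntegrableE {α : Type*} (C : Set (Set α)) (μ : Set α → ℝ≥0∞)
    (f : α → EReal) : Prop :=
  SRMeasurableE C f ∧ lintSR C μ (fun x => (f x).abs) < ⊤

/-- `lam` is the product of the measures `μ` and `ν` on σ-rings `S`, `T`:
the unique measure on the product σ-ring whose σ-finite component is the Halmos
product of the σ-finite components. -/
def IsProdMeasure {α β : Type*} (S : Set (Set α)) (T : Set (Set β))
    (μ : Set α → ℝ≥0∞) (ν : Set β → ℝ≥0∞) (lam : Set (α × β) → ℝ≥0∞) : Prop :=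
  IsMeasure (prodSR S T) lam ∧
  (∀ A ∈ S, ∀ B ∈ T, μ A < ⊤ → ν B < ⊤ → lam (A ×ˢ B) = μ A * ν B) ∧
  sigmaFin (prodSR S T) lam =
    genSR {R | ∃ A ∈ S, ∃ B ∈ T, μ A < ⊤ ∧ ν B < ⊤ ∧ R = A ×ˢ B}

/-!
In a rectangle `A × B` with sides of finite measure for `μ` and `count`, the side `B` is finite.
Having measurable horizontal sections, all but countably many of them empty, is stable under
differences and countable unions, so it passes from these rectangles to the σ-ring they generate.
Conversely, when `μ` is σ-finite, `A × {a}` is a countable union of rectangles `Aₖ × {a}` with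
`μ Aₖ < ∞`.
-/

section SigmaRing

variable {α : Type*}

theorem isSigmaRing_genSR (D : Set (Set α)) : IsSigmaRing (genSR D) :=
  ⟨fun _ hC => hC.1.1,
    fun _ _ hA hB C hC => hC.1.2.1 _ _ (hA C hC) (hB C hC),
    fun _ hf C hC => hC.1.2.2 _ fun n => hf n C hC⟩

theorem subset_genSR (D : Set (Set α)) : D ⊆ genSR D :=
  fun _ hA _ hC => hC.2 hA

theorem genSR_subset {C D : Set (Set α)} (hC : IsSigmaRing C) (hDC : D ⊆ C) : genSR D ⊆ C :=
  sInter_subset_of_mem ⟨hC, hDC⟩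

theorem IsSigmaRing.iUnion_mem {ι : Sort*} [Countable ι] {C : Set (Set α)} (hC : IsSigmaRing C)
    {f : ι → Set α} (hf : ∀ i, f i ∈ C) : (⋃ i, f i) ∈ C := by
  cases isEmpty_or_nonempty ι
  · rw [iUnion_of_empty]
    exact hC.1
  · obtain ⟨e, he⟩ := exists_surjective_nat ι
    rw [← he.iUnion_comp]
    exact hC.2.2 _ fun n => hf (e n)

end SigmaRing

section CountablySliced

theorem eq_iUnion_preimage_prod_singleton {α β : Type*} {ι : Sort*} {E : Set (α × β)}
    {a : ι → β} (ha : Prod.snd '' E ⊆ range a) : E = ⋃ i, ((·, a i) ⁻¹' E) ×ˢ ({a i} : Set β) := by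
  ext ⟨x, y⟩
  simp only [mem_iUnion, mem_prod, mem_preimage, mem_singleton_iff]
  refine ⟨fun hxy => ?_, fun ⟨_, hx, hy⟩ => hy ▸ hx⟩
  obtain ⟨i, rfl⟩ := ha (mem_image_of_mem Prod.snd hxy)
  exact ⟨i, hxy, rfl⟩

/-- The sets `E ⊆ α × β` with measurable horizontal sections `{x | (x, y) ∈ E}`, at most countably
many of them nonempty; these are the candidates for the σ-finite sets of `μ ⊗ count`. Countability
is expressed through the projection of `E` to `β`. -/
def countablySlicedSets (α β : Type*) [MeasurableSpace α] : Set (Set (α × β)) :=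
  {E | (∀ y, MeasurableSet ((·, y) ⁻¹' E)) ∧ (Prod.snd '' E).Countable}

variable {α β : Type*} [MeasurableSpace α]

theorem isSigmaRing_countablySlicedSets : IsSigmaRing (countablySlicedSets α β) := by
  refine ⟨⟨fun _ => .empty, by simp⟩, ?_, fun f hf => ⟨fun y => ?_, ?_⟩⟩
  · rintro E F ⟨hE, hE_countable⟩ ⟨hF, -⟩
    exact ⟨fun y => (hE y).diff (hF y), hE_countable.mono (image_mono sdiff_subset)⟩
  · rw [preimage_iUnion]
    exact .iUnion fun n => (hf n).1 y
  · rw [image_iUnion]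
    exact countable_iUnion fun n => (hf n).2

theorem prod_mem_countablySlicedSets {A : Set α} {B : Set β} (hA : MeasurableSet A)
    (hB : B.Countable) : A ×ˢ B ∈ countablySlicedSets α β := by
  classical
  refine ⟨fun y => ?_, hB.mono (snd_image_prod_subset A B)⟩
  rw [mk_preimage_prod_left_eq_if]
  split_ifs
  exacts [hA, .empty]

theorem mem_countablySlicedSets_iff_exists_iUnion [Nonempty β] {E : Set (α × β)} :
    E ∈ countablySlicedSets α β ↔ ∃ A : ℕ → Set α, ∃ a : ℕ → β,
      (∀ n, MeasurableSet (A n)) ∧ E = ⋃ n, A n ×ˢ ({a n} : Set β) := by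
  constructor
  · rintro ⟨hE, hE_countable⟩
    obtain ⟨a, ha⟩ := countable_iff_exists_subset_range.1 hE_countable
    exact ⟨fun n => (·, a n) ⁻¹' E, a, fun n => hE (a n), eq_iUnion_preimage_prod_singleton ha⟩
  · rintro ⟨A, a, hA, rfl⟩
    exact isSigmaRing_countablySlicedSets.iUnion_mem fun n =>
      prod_mem_countablySlicedSets (hA n) (countable_singleton (a n))

end CountablySliced

section FiniteRectangles

open MeasureTheory

variable {α β : Type*} [MeasurableSpace α] [MeasurableSpace β]

/-- The measurable rectangles with both sides of finite measure, which generate the σ-ring of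
σ-finite sets of `μ ⊗ ν`. -/
def finiteRectangles (μ : Measure α) (ν : Measure β) : Set (Set (α × β)) :=
  {R | ∃ A, MeasurableSet A ∧ ∃ B, MeasurableSet B ∧ μ A < ⊤ ∧ ν B < ⊤ ∧ R = A ×ˢ B}

theorem prod_mem_genSR_finiteRectangles (μ : Measure α) [SigmaFinite μ] {ν : Measure β}
    {A : Set α} {B : Set β} (hA : MeasurableSet A) (hB : MeasurableSet B) (hνB : ν B < ⊤) :
    A ×ˢ B ∈ genSR (finiteRectangles μ ν) := by
  have h_exhaust : A ×ˢ B = ⋃ k, (A ∩ spanningSets μ k) ×ˢ B := by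
    rw [← iUnion_prod_const, ← inter_iUnion, iUnion_spanningSets, inter_univ]
  rw [h_exhaust]
  refine (isSigmaRing_genSR _).iUnion_mem fun k => subset_genSR _
    ⟨_, hA.inter (measurableSet_spanningSets μ k), B, hB, ?_, hνB, rfl⟩
  exact (measure_mono inter_subset_right).trans_lt (measure_spanningSets_lt_top μ k)

variable [MeasurableSingletonClass β]

theorem finiteRectangles_count_subset_countablySlicedSets (μ : Measure α) :
    finiteRectangles μ Measure.count ⊆ countablySlicedSets α β := by
  rintro _ ⟨A, hA, B, -, -, hB, rfl⟩
  exact prod_mem_countablySlicedSets hA (Measure.count_apply_lt_top.1 hB).countable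

theorem genSR_finiteRectangles_count (μ : Measure α) [SigmaFinite μ] :
    genSR (finiteRectangles μ Measure.count) = countablySlicedSets α β := by
  refine (genSR_subset isSigmaRing_countablySlicedSets
    (finiteRectangles_count_subset_countablySlicedSets μ)).antisymm ?_
  rintro E ⟨hE, hE_countable⟩
  have : Countable (Prod.snd '' E) := hE_countable.to_subtype
  rw [eq_iUnion_preimage_prod_singleton (a := fun y : Prod.snd '' E => (y : β))
    Subtype.range_coe.superset]
  exact (isSigmaRing_genSR _).iUnion_mem fun y => prod_mem_genSR_finiteRectangles μ (hE y)
    (measurableSet_singleton (y : β)) (by rw [Measure.count_singleton]; exact one_lt_top)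

theorem stmt_13_general [Nonempty β] (μ : Measure α) [SigmaFinite μ]
    (lam : Set (α × β) → ℝ≥0∞)
    (hlam : IsProdMeasure {A : Set α | MeasurableSet A} {B : Set β | MeasurableSet B}
      (fun A => μ A) (fun B => Measure.count B) lam)
    (E : Set (α × β)) :
    E ∈ sigmaFin (prodSR {A : Set α | MeasurableSet A} {B : Set β | MeasurableSet B}) lam ↔
      ∃ A : ℕ → Set α, ∃ a : ℕ → β, (∀ n, MeasurableSet (A n)) ∧
        E = ⋃ n, A n ×ˢ ({a n} : Set β) := by
  have h_sigmaFin : sigmaFin (prodSR {A : Set α | MeasurableSet A}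
      {B : Set β | MeasurableSet B}) lam = genSR (finiteRectangles μ Measure.count) := hlam.2.2
  rw [h_sigmaFin, genSR_finiteRectangles_count, mem_countablySlicedSets_iff_exists_iUnion]

end FiniteRectangles

/-- a Borel set of the plane is σ-finite for the product of
Lebesgue measure and counting measure iff it is a countable union of sets
`Aₙ × {aₙ}` with `Aₙ` Borel. -/
theorem stmt_13
    (lam : Set (ℝ × ℝ) → ℝ≥0∞)
    (hlam : IsProdMeasure {A : Set ℝ | MeasurableSet A} {B : Set ℝ | MeasurableSet B}
      (fun A => MeasureTheory.volume A) (fun B => MeasureTheory.Measure.count B) lam)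
    (B : Set (ℝ × ℝ))
    (hB : B ∈ prodSR {A : Set ℝ | MeasurableSet A} {B : Set ℝ | MeasurableSet B}) :
    B ∈ sigmaFin (prodSR {A : Set ℝ | MeasurableSet A} {B : Set ℝ | MeasurableSet B}) lam ↔
      ∃ A : ℕ → Set ℝ, ∃ a : ℕ → ℝ, (∀ n, MeasurableSet (A n)) ∧
        B = ⋃ n, A n ×ˢ ({a n} : Set ℝ) :=
  stmt_13_general MeasureTheory.volume lam hlam B
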